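/- Let A be a finitely generated R-algebra and let A' be a finitely generated A-algebra. Assume that A' is flat over R and that for every geometric point 𝔽 of R of positive characteristic, 𝔽 ⊗_R A' is flat over 𝔽 ⊗_R A. Then A' is flat over A. -/

import Mathlib

/-!
Flatness of `A'` over `A` means that for every ideal `I` of `A` the kernel `K(I)` of the
multiplication map `A' ⊗ I → A'` vanishes. It suffices that the annihilator of `K(I)` lies in no
maximal ideal `m` of `A'`. By the Nullstellensatz over `ℤ`, `m` contains a prime number `p`; it is
not a unit of `R`, and it is a nonzerodivisor on `A'` since `A'` is flat over `R`.

* `exists_lift`: as `A'/p` is flat over `A/p`, an element of `K(I)` is, by the equational criterion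
  modulo `p`, the image of an element of `A' ⊗ (I : p)` under multiplication by `p`. As `p` is
  regular on `A'`, that element lies in `K(I : p)`.
* `exists_annihilator`: replacing `I` by `(I : p)` repeatedly, Noetherianity leads to the case
  `I = (I : p)`, where `K(I) = p K(I)`; Nakayama gives `r ≡ 1` modulo `p` killing `K(I)`, and the
  same `r` kills the kernel for the ideal at the start. Since `p ∈ m`, such an `r` is not in `m`.
  No regularity of `p` on `A` is needed.
* `fiberMap_flat_descend`: flatness of `A'/p` over `A/p` follows from flatness of the geometric
  fibre over an algebraically closed field `F` of characteristic `p`, because `F ⊗ A'` is flat over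
  `A/p` and has `A'/p` as a direct summand.
-/

open TensorProduct

universe w

namespace FlatFibers

/-! ### A fibrewise flatness criterion -/

section Criterion

variable {A B : Type*} [CommRing A] [CommRing B] [Algebra A B]

/-- The multiplication map `B ⊗ I → B`, `b ⊗ a ↦ a b`, for an ideal `I` of `A`. -/
def mulMap (B : Type*) [CommRing B] [Algebra A B] (I : Ideal A) : B ⊗[A] I →ₗ[B] B :=
  (AlgebraTensorModule.rid A B B).toLinearMap ∘ₗ I.subtype.baseChange B

lemma mulMap_tmul (I : Ideal A) (b : B) (a : I) : mulMap B I (b ⊗ₜ a) = (a : A) • b := by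
  simp [mulMap]

/-- The ideal quotient `(I : p)`. -/
def colonElt (I : Ideal A) (p : A) : Ideal A := Submodule.comap (LinearMap.mulLeft A p) I

lemma mem_colonElt {I : Ideal A} {p a : A} : a ∈ colonElt I p ↔ p * a ∈ I := Iff.rfl

/-- Multiplication by `p` as a map `(I : p) → I`. -/
def mulColon (I : Ideal A) (p : A) : colonElt I p →ₗ[A] I :=
  (LinearMap.mulLeft A p).restrict fun _ h => h

@[simp]
lemma coe_mulColon (I : Ideal A) (p : A) (a : colonElt I p) :
    (mulColon I p a : A) = p * a := rfl

/-- The equational form of flatness of `B/pB` over `A/pA`, lifted to `A` and `B`: a relation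
`∑ aᵢ bᵢ = 0` in `B` is trivial modulo `p`. Only relations that hold in `B` itself are considered,
which is all that is used of them. -/
def FlatMod (B : Type*) [CommRing B] [Algebra A B] (p : A) : Prop :=
  ∀ (l : ℕ) (a : Fin l → A) (b : Fin l → B), ∑ i, a i • b i = 0 →
    ∃ (k : ℕ) (c : Fin l → Fin k → A) (d : Fin k → A) (y : Fin k → B) (z : Fin l → B),
      (∀ i, b i = ∑ j, c i j • y j + p • z i) ∧ ∀ j, ∑ i, a i * c i j = p * d j

/-- The kernel of `B ⊗ I → B` is the image of the kernel of `B ⊗ (I : p) → B` under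
multiplication by `p`. -/
lemma exists_lift {p : A} (hp : IsSMulRegular B p) (hflat : FlatMod B p) (I : Ideal A)
    {x : B ⊗[A] I} (hx : mulMap B I x = 0) :
    ∃ y, mulMap B (colonElt I p) y = 0 ∧ (mulColon I p).baseChange B y = x := by
  suffices ∃ y, (mulColon I p).baseChange B y = x by
    obtain ⟨y, rfl⟩ := this
    refine ⟨y, hp ?_, rfl⟩
    have key : ∀ y, mulMap B I ((mulColon I p).baseChange B y)
        = p • mulMap B (colonElt I p) y := by
      intro y
      induction y with
      | zero => simp
      | add y z hy hz => simp only [map_add, hy, hz, smul_add]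
      | tmul b a => simp [mulMap_tmul, mul_smul]
    simpa [key] using hx
  obtain ⟨S, rfl⟩ := TensorProduct.exists_finset x
  let e := S.equivFin.symm
  have hsum : ∀ {M : Type _} [AddCommMonoid M] (f : B × I → M),
      ∑ i ∈ S, f i = ∑ i, f (e i) := fun f => by
    rw [← Finset.sum_coe_sort, ← e.sum_comp]
  rw [hsum]
  rw [hsum, map_sum] at hx
  simp only [mulMap_tmul] at hx
  obtain ⟨k, c, d, y, z, hb, hd⟩ := hflat _ _ _ hx
  have hd' : ∀ j, d j ∈ colonElt I p := fun j => by
    rw [mem_colonElt, ← hd]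
    exact I.sum_mem fun i _ => I.mul_mem_right _ (e i).1.2.2
  have ha' : ∀ i, ((e i).1.2 : A) ∈ colonElt I p := fun i => I.mul_mem_left _ (e i).1.2.2
  -- With `bᵢ = ∑ⱼ cᵢⱼ yⱼ + p zᵢ` and `∑ᵢ aᵢ cᵢⱼ = p dⱼ`, one has
  -- `∑ᵢ bᵢ ⊗ aᵢ = ∑ⱼ yⱼ ⊗ p dⱼ + ∑ᵢ zᵢ ⊗ p aᵢ`.
  refine ⟨∑ j, y j ⊗ₜ ⟨d j, hd' j⟩ + ∑ i, z i ⊗ₜ ⟨_, ha' i⟩, ?_⟩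
  have h1 : ∀ j, mulColon I p ⟨d j, hd' j⟩ = ∑ i, c i j • (e i).1.2 := fun j => by
    ext
    simp [← hd, mul_comm]
  have h2 : ∀ i, mulColon I p ⟨_, ha' i⟩ = p • (e i).1.2 := fun i => by
    ext
    simp
  have h3 : ∀ i, (e i).1.1 ⊗ₜ[A] (e i).1.2
      = ∑ j, y j ⊗ₜ (c i j • (e i).1.2) + z i ⊗ₜ (p • (e i).1.2) := fun i => by
    rw [hb i, TensorProduct.add_tmul, TensorProduct.sum_tmul]
    simp only [TensorProduct.smul_tmul]
  simp only [map_add, map_sum, LinearMap.baseChange_tmul, h1, h2, h3, TensorProduct.tmul_sum,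
    Finset.sum_add_distrib]
  rw [Finset.sum_comm]

/-- The kernel of `B ⊗ I → B` is killed by an element congruent to `1` modulo `p`, by Noetherian
induction on `I` along `I ≤ (I : p)` and Nakayama's lemma when `I = (I : p)`. -/
lemma exists_annihilator [IsNoetherianRing A] [IsNoetherianRing B] {p : A}
    (hp : IsSMulRegular B p) (hflat : FlatMod B p) (I : Ideal A) :
    ∃ r : B, r - 1 ∈ Ideal.span {algebraMap A B p} ∧
      ∀ x, mulMap B I x = 0 → r • x = 0 := by
  induction I using IsNoetherian.induction with
  | hgt I ih =>
    have hle : I ≤ colonElt I p := fun a ha => Ideal.mul_mem_left I _ ha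
    rcases hle.lt_or_eq with hlt | heq
    · obtain ⟨r, hr, h⟩ := ih _ hlt
      refine ⟨r, hr, fun x hx => ?_⟩
      obtain ⟨y, hy, rfl⟩ := exists_lift hp hflat I hx
      rw [← map_smul, h y hy, map_zero]
    · obtain ⟨r, hr, h⟩ := Submodule.exists_sub_one_mem_and_smul_eq_zero_of_fg_of_le_smul
        (Ideal.span {algebraMap A B p}) (LinearMap.ker (mulMap B I))
        (IsNoetherian.noetherian _) (fun x hx => by
          obtain ⟨y, hy, rfl⟩ := exists_lift hp hflat I hx
          -- `J` stands for `(I : p)`, generalized so that the equality with `I` can be substituted.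
          have key : ∀ (J : Ideal A) (hJ : J = I) (f : J →ₗ[A] I)
              (hf : ∀ a, (f a : A) = p * a) (y : B ⊗[A] J), mulMap B J y = 0 →
              f.baseChange B y ∈
                Ideal.span {algebraMap A B p} • LinearMap.ker (mulMap B I) := by
            rintro J rfl f hf y hy
            have : f = p • LinearMap.id := by ext a; simp [hf]
            subst this
            have : (p • LinearMap.id : J →ₗ[A] J).baseChange B y = algebraMap A B p • y := by
              simp [LinearMap.baseChange_smul, LinearMap.baseChange_id]
            rw [this]
            exact Submodule.smul_mem_smul (Ideal.mem_span_singleton_self _) hy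
          exact key _ heq.symm _ (fun _ => rfl) y hy)
      exact ⟨r, hr, h⟩

lemma flat_of_flatMod [IsNoetherianRing A] [IsNoetherianRing B]
    (h : ∀ m : Ideal B, m.IsMaximal →
      ∃ p : A, algebraMap A B p ∈ m ∧ IsSMulRegular B p ∧ FlatMod B p) : Module.Flat A B := by
  rw [Module.Flat.iff_lTensor_injective]
  intro I _
  rw [injective_iff_map_eq_zero]
  intro x hx
  have hx' : mulMap B I x = 0 := by
    have : I.subtype.baseChange B x = 0 := hx
    simp [mulMap, this]
  by_contra hne
  -- The kernel below is the annihilator of `x`.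
  have htop : LinearMap.ker (LinearMap.toSpanSingleton B _ x) ≠ ⊤ := fun h => hne <| by
    have : (1 : B) ∈ LinearMap.ker (LinearMap.toSpanSingleton B _ x) := h ▸ trivial
    simpa using this
  obtain ⟨m, hm, hle⟩ := Ideal.exists_le_maximal _ htop
  obtain ⟨p, hpm, hp, hflat⟩ := h m hm
  obtain ⟨r, hr, hann⟩ := exists_annihilator hp hflat I
  have hrm : r ∈ m := hle (by simpa using hann x hx')
  have hr1 : r - 1 ∈ m := (Ideal.span_singleton_le_iff_mem m).mpr hpm hr
  exact hm.ne_top ((Ideal.eq_top_iff_one m).mpr (by simpa using m.sub_mem hrm hr1))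

/-- Here `S` and `T` play the roles of `A/pA` and `B/pB`. -/
lemma flatMod_of_flat_quotient {S T : Type*} [CommRing S] [CommRing T] [Algebra S T]
    [Module.Flat S T] (π : A →+* S) (π' : B →+* T) (hπ : Function.Surjective π)
    (hπ' : Function.Surjective π') (hcomm : ∀ a, algebraMap S T (π a) = π' (algebraMap A B a)) {p : A}
    (hker : ∀ a, π a = 0 → ∃ d, a = p * d)
    (hker' : ∀ b, π' b = 0 → ∃ z, b = algebraMap A B p * z) : FlatMod B p := by
  intro l a b hab
  have hsmul : ∀ a b, π a • π' b = π' (a • b) := fun a b => by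
    simp [Algebra.smul_def, hcomm]
  have hrel : ∑ i, π (a i) • π' (b i) = 0 := by
    simp only [hsmul, ← map_sum, hab, map_zero]
  obtain ⟨k, c, y, hb, hc⟩ :=
    Module.Flat.isTrivialRelation_of_sum_smul_eq_zero (R := S) (M := T) hrel
  choose c' hc' using fun i j => hπ (c i j)
  choose y' hy' using fun j => hπ' (y j)
  simp only [← hc', ← hy', hsmul, ← map_mul, ← map_sum] at hb hc
  choose d hd using fun j => hker _ (hc j)
  choose z hz using fun i => hker' (b i - ∑ j, c' i j • y' j) (by rw [map_sub, hb, sub_self])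
  refine ⟨k, c', d, y', z, fun i => ?_, hd⟩
  rw [Algebra.smul_def p, ← hz]
  exact (add_sub_cancel _ _).symm

end Criterion

/-! ### Maximal ideals of finitely generated rings -/

section Nullstellensatz

lemma isJacobsonRing_int : IsJacobsonRing ℤ := by
  rw [isJacobsonRing_iff_prime_eq]
  intro P hP
  by_cases h : P = ⊥
  · subst h
    refine le_antisymm (fun x hx => ?_) Ideal.le_jacobson
    have := Int.isUnit_iff.mp (Ideal.mem_jacobson_bot.mp hx x)
    rw [Ideal.mem_bot]
    rcases this with h | h <;> nlinarith
  · have := hP.isMaximal h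
    exact Ideal.jacobson_eq_self_of_isMaximal

/-- A residue field of `B` is finite over `ℤ`, so it cannot have characteristic zero. -/
lemma exists_prime_mem (B : Type*) [CommRing B] [Algebra.FiniteType ℤ B] (m : Ideal B)
    (hm : m.IsMaximal) : ∃ p : ℕ, p.Prime ∧ (p : B) ∈ m := by
  let := Ideal.Quotient.field m
  have := isJacobsonRing_int
  have : Algebra.FiniteType ℤ (B ⧸ m) := inferInstance
  have hfin : Module.Finite ℤ (B ⧸ m) := finite_of_finite_type_of_isJacobsonRing ℤ (B ⧸ m)
  obtain ⟨p, hp⟩ := CharP.exists (B ⧸ m)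
  rcases CharP.char_is_prime_or_zero (B ⧸ m) p with h | rfl
  · refine ⟨p, h, ?_⟩
    rw [← Ideal.Quotient.eq_zero_iff_mem, map_natCast]
    exact CharP.cast_eq_zero _ _
  · have := CharP.charP_to_charZero (B ⧸ m)
    exact absurd (isField_of_isIntegral_of_isField (R := ℤ) (S := B ⧸ m)
      (FaithfulSMul.algebraMap_injective ℤ (B ⧸ m)) (Field.toIsField _)) Int.not_isField

end Nullstellensatz

/-! ### Descent from geometric fibres to fibres over prime fields -/

section Descent

/-- If `U` is flat over `S` and `i : T → U` has a `T`-linear retraction `ρ`, then `T` is flat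
over `S`. -/
lemma flat_of_comp_of_retraction {S T U : Type*} [CommRing S] [CommRing T] [CommRing U]
    {f : S →+* T} (i : T →+* U) (h : (i.comp f).Flat) (ρ : U →+ T)
    (hmul : ∀ t u, ρ (i t * u) = t * ρ u) (hone : ρ 1 = 1) : f.Flat := by
  let := f.toAlgebra
  let := (i.comp f).toAlgebra
  have : Module.Flat S U := h
  change Module.Flat S T
  refine Module.Flat.of_retract (M := U)
    { i with map_smul' := fun x y => ?_ } { ρ with map_smul' := fun x y => ?_ } ?_
  · simp [Algebra.smul_def, RingHom.algebraMap_toAlgebra]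
  · simp [Algebra.smul_def, RingHom.algebraMap_toAlgebra, hmul]
  · ext y
    simpa [hone] using hmul y 1

/-- The base change `F ⊗ A → F ⊗ A'` of the structure map `A → A'`. -/
noncomputable def fiberMap (R A A' : Type*) [CommRing R] [CommRing A] [Algebra R A]
    [CommRing A'] [Algebra R A'] [Algebra A A'] [IsScalarTower R A A']
    (F : Type*) [CommRing F] [Algebra R F] : F ⊗[R] A →ₐ[R] F ⊗[R] A' :=
  Algebra.TensorProduct.map (AlgHom.id R F) (IsScalarTower.toAlgHom R A A')

variable {R A A' : Type*} [CommRing R] [CommRing A] [Algebra R A]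
    [CommRing A'] [Algebra R A'] [Algebra A A'] [IsScalarTower R A A']

lemma includeRight_flat (k F C : Type*) [Field k] [Field F] [Algebra k F] [CommRing C]
    [Algebra k C] : (Algebra.TensorProduct.includeRight : C →ₐ[k] F ⊗[k] C).toRingHom.Flat := by
  have h1 : (algebraMap C (C ⊗[k] F)).Flat := by
    rw [RingHom.flat_algebraMap_iff]
    infer_instance
  exact h1.comp (.of_bijective (Algebra.TensorProduct.comm k C F).bijective)

lemma fiberMap_flat_descend (k F : Type*) [Field k] [Field F] [Algebra R k] [Algebra R F]
    [Algebra k F] [IsScalarTower R k F]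
    (h : (fiberMap R A A' F).toRingHom.Flat) : (fiberMap R A A' k).toRingHom.Flat := by
  let e := Algebra.TensorProduct.cancelBaseChange R k k F A
  let e' := Algebra.TensorProduct.cancelBaseChange R k k F A'
  let i : k ⊗[R] A →+* F ⊗[k] (k ⊗[R] A) :=
    (Algebra.TensorProduct.includeRight : _ →ₐ[k] F ⊗[k] (k ⊗[R] A)).toRingHom
  let i' : k ⊗[R] A' →+* F ⊗[k] (k ⊗[R] A') :=
    (Algebra.TensorProduct.includeRight : _ →ₐ[k] F ⊗[k] (k ⊗[R] A')).toRingHom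
  have hi : i.Flat := includeRight_flat k F _
  have hcomp : (i'.comp (fiberMap R A A' k).toRingHom).Flat := by
    -- Up to `F ⊗[k] (k ⊗[R] _) ≃ F ⊗[R] _`, the composite is `k ⊗ A → F ⊗ A → F ⊗ A'`.
    have heq : i'.comp (fiberMap R A A' k).toRingHom =
        (e'.symm.toRingEquiv : F ⊗[R] A' →+* _).comp ((fiberMap R A A' F).toRingHom.comp
          ((e.toRingEquiv : _ →+* F ⊗[R] A).comp i)) := by
      refine RingHom.ext fun x => ?_
      induction x with
      | zero => simp
      | add x y hx hy => simp only [map_add, hx, hy]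
      | tmul x a =>
        apply e'.injective
        simp [i, i', e, e', fiberMap]
    rw [heq]
    exact ((hi.comp (.of_bijective e.bijective)).comp h).comp (.of_bijective e'.symm.bijective)
  -- A `k`-linear retraction of `k → F` induces the retraction of `i'`.
  obtain ⟨r, hr⟩ := (Algebra.linearMap k F).exists_leftInverse_of_injective
    (LinearMap.ker_eq_bot.mpr (algebraMap k F).injective)
  have hr1 : r 1 = 1 := by simpa using LinearMap.congr_fun hr 1
  let ρ : F ⊗[k] (k ⊗[R] A') →ₗ[k] k ⊗[R] A' :=
    (TensorProduct.lid k (k ⊗[R] A')).toLinearMap ∘ₗ r.rTensor _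
  have hρ : ∀ f y, ρ (f ⊗ₜ y) = r f • y := fun _ _ => rfl
  refine flat_of_comp_of_retraction i' hcomp ρ.toAddMonoidHom (fun t u => ?_) ?_
  · induction u with
    | zero => simp
    | add y z hy hz => simp_all [mul_add]
    | tmul f y => simp [i', hρ]
  · simp [Algebra.TensorProduct.one_def (A := F), hρ, hr1]

lemma exists_one_tmul_eq {k : Type*} [CommRing k] [Algebra R k]
    (hs : Function.Surjective (algebraMap R k)) (x : k ⊗[R] A) : ∃ c : A, 1 ⊗ₜ c = x := by
  induction x with
  | zero => exact ⟨0, by simp⟩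
  | add x y hx hy =>
    obtain ⟨c, rfl⟩ := hx
    obtain ⟨d, rfl⟩ := hy
    exact ⟨c + d, by simp [TensorProduct.tmul_add]⟩
  | tmul x c =>
    obtain ⟨z, rfl⟩ := hs x
    exact ⟨z • c, by rw [← TensorProduct.smul_tmul, Algebra.smul_def, mul_one]⟩

/-- If `R → k` is surjective with kernel in `pR`, then `A → k ⊗ A` has kernel in `pA`: the map
`A → A/pA` factors through it. -/
lemma exists_eq_mul_of_one_tmul_eq_zero {k : Type*} [CommRing k] [Algebra R k]
    (hs : Function.Surjective (algebraMap R k)) (p : ℕ)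
    (hker : ∀ r : R, algebraMap R k r = 0 → (p : R) ∣ r) {c : A}
    (hc : (1 : k) ⊗ₜ[R] c = 0) : ∃ d, c = p * d := by
  let Q := A ⧸ Ideal.span {(p : A)}
  have hp : (p : Q) = 0 := by
    rw [← map_natCast (Ideal.Quotient.mk _), Ideal.Quotient.eq_zero_iff_mem]
    exact Ideal.mem_span_singleton_self _
  have hle : RingHom.ker (algebraMap R k) ≤ RingHom.ker (algebraMap R Q) := fun r hr => by
    obtain ⟨s, rfl⟩ := hker r hr
    rw [RingHom.mem_ker, map_mul, map_natCast, hp, zero_mul]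
  let G : k →ₐ[R] Q :=
    { (algebraMap R k).liftOfSurjective hs ⟨algebraMap R Q, hle⟩ with
      commutes' := fun r => RingHom.liftOfRightInverse_comp_apply _ _ _ ⟨algebraMap R Q, hle⟩ r }
  have h := congrArg (Algebra.TensorProduct.productMap G (Ideal.Quotient.mkₐ R _)) hc
  rw [Algebra.TensorProduct.productMap_apply_tmul, map_one, one_mul, map_zero,
    Ideal.Quotient.mkₐ_eq_mk, Ideal.Quotient.eq_zero_iff_mem] at h
  exact Ideal.mem_span_singleton.mp h

lemma flatMod_of_fiberMap_flat {k : Type*} [CommRing k] [Algebra R k]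
    (hs : Function.Surjective (algebraMap R k)) (p : ℕ)
    (hker : ∀ r : R, algebraMap R k r = 0 → (p : R) ∣ r)
    (h : (fiberMap R A A' k).toRingHom.Flat) : FlatMod A' (p : A) := by
  let := (fiberMap R A A' k).toRingHom.toAlgebra
  have : Module.Flat (k ⊗[R] A) (k ⊗[R] A') := h
  exact flatMod_of_flat_quotient
    (Algebra.TensorProduct.includeRight : A →ₐ[R] k ⊗[R] A).toRingHom
    (Algebra.TensorProduct.includeRight : A' →ₐ[R] k ⊗[R] A').toRingHom
    (exists_one_tmul_eq hs) (exists_one_tmul_eq hs) (fun a => by simp [RingHom.algebraMap_toAlgebra, fiberMap])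
    (fun _ => exists_eq_mul_of_one_tmul_eq_zero hs p hker)
    (fun _ hb => by simpa using exists_eq_mul_of_one_tmul_eq_zero hs p hker hb)

end Descent

/-! ### Closed points of `ℤ[1/n]` and geometric points above them -/

section Geometric

lemma exists_ringHom_zmod (n : ℕ) (R : Type*) [CommRing R] [IsLocalization.Away (n : ℤ) R]
    (p : ℕ) (hp : p.Prime) (hpR : ¬ IsUnit (p : R)) :
    ∃ f : R →+* ZMod p, ∀ r, f r = 0 → (p : R) ∣ r := by
  have := Fact.mk hp
  have hnR : IsUnit (n : R) := by
    simpa using IsLocalization.Away.algebraMap_isUnit (S := R) (n : ℤ)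
  have hpn : ¬ p ∣ n := by
    rintro ⟨m, rfl⟩
    rw [Nat.cast_mul] at hnR
    exact hpR (isUnit_of_mul_isUnit_left hnR)
  have hn : IsUnit (Int.castRingHom (ZMod p) (n : ℤ)) := by
    rw [isUnit_iff_ne_zero]
    simpa [ZMod.natCast_eq_zero_iff] using hpn
  refine ⟨IsLocalization.Away.lift (n : ℤ) hn, fun r hr => ?_⟩
  obtain ⟨k, z, hz⟩ := IsLocalization.Away.surj (n : ℤ) r
  have h0 : ((z : ℤ) : ZMod p) = 0 := by
    have := congrArg (IsLocalization.Away.lift (n : ℤ) hn) hz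
    rw [map_mul, hr, zero_mul, IsLocalization.Away.lift_eq] at this
    exact this.symm
  obtain ⟨w, rfl⟩ := (ZMod.intCast_zmod_eq_zero_iff_dvd _ _).mp h0
  have hdvd : (p : R) ∣ r * (n : R) ^ k := ⟨(w : R), by simpa using hz⟩
  exact (hnR.pow k).dvd_mul_right.mp hdvd

/-- The universe lift allows the field to live in any prescribed universe. -/
lemma exists_geometric_point (p : ℕ) [Fact p.Prime] :
    ∃ (F : Type w) (_ : Field F), IsAlgClosed F ∧ CharP F p ∧ Nonempty (ZMod p →+* F) := by
  let f : ZMod p →+* AlgebraicClosure (ULift.{w} (ZMod p)) :=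
    (algebraMap _ _).comp (ULift.ringEquiv.symm : ZMod p ≃+* ULift.{w} (ZMod p)).toRingHom
  exact ⟨_, inferInstance, inferInstance, charP_of_injective_ringHom f.injective p, ⟨f⟩⟩

end Geometric
end FlatFibers

open FlatFibers

theorem flat_over_A_of_flat_over_R_and_geometric_fibers
    (n : ℕ) (hn : 0 < n)
    (R : Type*) [CommRing R] [IsLocalization.Away (n : ℤ) R]
    (A : Type*) [CommRing A] [Algebra R A] [Algebra.FiniteType R A]
    (A' : Type*) [CommRing A'] [Algebra R A'] [Algebra A A'] [IsScalarTower R A A']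
    [Algebra.FiniteType A A']
    (hflatR : Module.Flat R A')
    (hgeom : ∀ (𝔽 : Type*) [Field 𝔽] [IsAlgClosed 𝔽] [Algebra R 𝔽] (p : ℕ),
      p.Prime → CharP 𝔽 p → ¬ IsUnit (p : R) →
      letI : Algebra (𝔽 ⊗[R] A) (𝔽 ⊗[R] A') :=
        ((Algebra.TensorProduct.map (AlgHom.id R 𝔽)
          (IsScalarTower.toAlgHom R A A')).toRingHom).toAlgebra
      Module.Flat (𝔽 ⊗[R] A) (𝔽 ⊗[R] A')) :
    Module.Flat A A' := by
  have hRft : Algebra.FiniteType ℤ R := IsLocalization.finiteType_of_monoid_fg (.powers (n : ℤ)) R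
  have hRN : IsNoetherianRing R := IsLocalization.isNoetherianRing (.powers (n : ℤ)) R inferInstance
  have hAN : IsNoetherianRing A := Algebra.FiniteType.isNoetherianRing R A
  have hA'N : IsNoetherianRing A' := Algebra.FiniteType.isNoetherianRing A A'
  have hAft : Algebra.FiniteType ℤ A := .trans hRft inferInstance
  have hA'ft : Algebra.FiniteType ℤ A' := .trans hAft inferInstance
  have hZflat : Module.Flat ℤ A' := by
    have := IsLocalization.flat R (.powers (n : ℤ))
    exact Module.Flat.trans ℤ R A'
  refine flat_of_flatMod fun m hm => ?_
  obtain ⟨p, hp, hpm⟩ := exists_prime_mem A' m hm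
  have hpR : ¬ IsUnit (p : R) := fun h => hm.ne_top <|
    Ideal.eq_top_of_isUnit_mem _ hpm (by simpa using h.map (algebraMap R A'))
  refine ⟨p, by simpa using hpm, ?_, ?_⟩
  · have : IsSMulRegular A' (p : ℤ) := Module.Flat.isSMulRegular_of_nonZeroDivisors
      (mem_nonZeroDivisors_of_ne_zero (by exact_mod_cast hp.ne_zero))
    intro x y hxy
    refine this ?_
    simpa [Algebra.smul_def] using hxy
  · have := Fact.mk hp
    obtain ⟨f, hf⟩ := exists_ringHom_zmod n R p hp hpR
    let := f.toAlgebra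
    obtain ⟨F, _, _, _, ⟨g⟩⟩ := exists_geometric_point p
    let := g.toAlgebra
    let := (g.comp f).toAlgebra
    have : IsScalarTower R (ZMod p) F := .of_algebraMap_eq fun _ => rfl
    exact flatMod_of_fiberMap_flat (ZMod.ringHom_surjective f) p hf
      (fiberMap_flat_descend (ZMod p) F (hgeom F p hp ‹_› hpR))
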